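/- For sufficiently large ρ the collection of sets Ξ(V), with V ranging over all lattice r-subspaces, satisfies: (i) ℝ^d = ∪_V Ξ(V); (ii) Ξ(V₁) ∩ Ξ(V₂) = ∅ whenever V₁ ≠ V₂; (iii) for every lattice r-subspace V and every ξ ∈ Ξ(V), one has Υ(ξ) ⊆ Ξ(V) and N(ξ) ⊆ V. -/

import Mathlib

noncomputable section

open Set Submodule Module MeasureTheory Relation
open scoped RealInnerProductSpace

variable {d : ℕ}

/-- The lattice Γ generated over ℤ by the basis `B` of ℝ^d. -/
def latticeOf (B : Basis (Fin d) ℝ (EuclideanSpace ℝ (Fin d))) :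
    Submodule ℤ (EuclideanSpace ℝ (Fin d)) :=
  Submodule.span ℤ (Set.range B)

/-- The determinant d(Γ) of the lattice generated by `B`. -/
def latDet (B : Basis (Fin d) ℝ (EuclideanSpace ℝ (Fin d))) : ℝ :=
  |(EuclideanSpace.basisFun (Fin d) ℝ).toBasis.det (fun i => B i)|

/-- The dual lattice Γ† = {θ : θ·g ∈ 2πℤ for all g ∈ Γ}. -/
def dualLattice (B : Basis (Fin d) ℝ (EuclideanSpace ℝ (Fin d))) :
    Set (EuclideanSpace ℝ (Fin d)) :=
  {θ | ∀ g ∈ latticeOf B, ∃ k : ℤ, ⟪θ, g⟫ = 2 * Real.pi * k}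

/-- Θ_r : nonzero dual lattice vectors of norm at most r. -/
def Theta (B : Basis (Fin d) ℝ (EuclideanSpace ℝ (Fin d))) (r : ℝ) :
    Set (EuclideanSpace ℝ (Fin d)) :=
  {θ | θ ∈ dualLattice B ∧ θ ≠ 0 ∧ ‖θ‖ ≤ r}

/-- Θ_r⁰ : dual lattice vectors of norm at most r (including 0). -/
def Theta0 (B : Basis (Fin d) ℝ (EuclideanSpace ℝ (Fin d))) (r : ℝ) :
    Set (EuclideanSpace ℝ (Fin d)) :=
  {θ | θ ∈ dualLattice B ∧ ‖θ‖ ≤ r}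

/-- A lattice r-subspace: a subspace spanned by dual lattice vectors from Θ_r⁰. -/
def IsLatticeSubspace (B : Basis (Fin d) ℝ (EuclideanSpace ℝ (Fin d))) (r : ℝ)
    (V : Submodule ℝ (EuclideanSpace ℝ (Fin d))) : Prop :=
  ∃ S : Set (EuclideanSpace ℝ (Fin d)), S ⊆ Theta0 B r ∧ V = Submodule.span ℝ S

/-- Orthogonal projection ξ_V onto a subspace, viewed in the ambient space. -/
def projV (V : Submodule ℝ (EuclideanSpace ℝ (Fin d))) (ξ : EuclideanSpace ℝ (Fin d)) :
    EuclideanSpace ℝ (Fin d) :=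
  (orthogonalProjection V ξ : EuclideanSpace ℝ (Fin d))

/-- ω_n: the volume of the unit ball in ℝ^n. -/
def unitBallVol (n : ℕ) : ℝ :=
  (MeasureTheory.volume (Metric.ball (0 : EuclideanSpace ℝ (Fin n)) 1)).toReal

/-- The resonant layer Λ(θ) (= ℝ^d when θ = 0). -/
def layer (ρ a : ℝ) (θ : EuclideanSpace ℝ (Fin d)) : Set (EuclideanSpace ℝ (Fin d)) :=
  {ξ | θ = 0 ∨ |⟪ξ, θ⟫| < ρ ^ a * ‖θ‖}

/-- Υ_θ(ξ): the points θ-resonant congruent to ξ. -/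
def upsTheta (ρ a : ℝ) (θ ξ : EuclideanSpace ℝ (Fin d)) : Set (EuclideanSpace ℝ (Fin d)) :=
  {η | ξ ∈ layer ρ a θ ∧ η ∈ layer ρ a θ ∧ ∃ l : ℤ, ξ - η = (l : ℝ) • θ}

/-- One step of resonant congruence (with some θ ∈ Θ_r⁰). -/
def resStep (B : Basis (Fin d) ℝ (EuclideanSpace ℝ (Fin d))) (ρ a r : ℝ)
    (ξ η : EuclideanSpace ℝ (Fin d)) : Prop :=
  ∃ θ ∈ Theta0 B r, η ∈ upsTheta ρ a θ ξ

/-- Υ(ξ): all points resonant congruent to ξ. -/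
def Ups (B : Basis (Fin d) ℝ (EuclideanSpace ℝ (Fin d))) (ρ a r : ℝ)
    (ξ : EuclideanSpace ℝ (Fin d)) : Set (EuclideanSpace ℝ (Fin d)) :=
  {η | Relation.ReflTransGen (resStep B ρ a r) ξ η}

/-- N(ξ) = Υ(ξ) − ξ. -/
def resN (B : Basis (Fin d) ℝ (EuclideanSpace ℝ (Fin d))) (ρ a r : ℝ)
    (ξ : EuclideanSpace ℝ (Fin d)) : Set (EuclideanSpace ℝ (Fin d)) :=
  {m | ξ + m ∈ Ups B ρ a r ξ}

/-- Ξ₁(V) = {ξ : |ξ_V| < ρ^{α_n}}, n = dim V. -/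
def Xi1 (ρ : ℝ) (α : ℕ → ℝ) (V : Submodule ℝ (EuclideanSpace ℝ (Fin d))) :
    Set (EuclideanSpace ℝ (Fin d)) :=
  {ξ | ‖projV V ξ‖ < ρ ^ α (Module.finrank ℝ V)}

/-- Ξ₂(V) = ∪_{ξ ∈ Ξ₁(V)} Υ(ξ). -/
def Xi2 (B : Basis (Fin d) ℝ (EuclideanSpace ℝ (Fin d))) (ρ r : ℝ) (α : ℕ → ℝ)
    (V : Submodule ℝ (EuclideanSpace ℝ (Fin d))) : Set (EuclideanSpace ℝ (Fin d)) :=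
  {η | ∃ ξ ∈ Xi1 ρ α V, η ∈ Ups B ρ (α 1) r ξ}

/-- Ξ(V): Ξ₂(V) minus the Ξ₂(W) for all lattice r-subspaces W of larger dimension. -/
def Xi (B : Basis (Fin d) ℝ (EuclideanSpace ℝ (Fin d))) (ρ r : ℝ) (α : ℕ → ℝ)
    (V : Submodule ℝ (EuclideanSpace ℝ (Fin d))) : Set (EuclideanSpace ℝ (Fin d)) :=
  Xi2 B ρ r α V \
    ⋃ W ∈ {W : Submodule ℝ (EuclideanSpace ℝ (Fin d)) |
        IsLatticeSubspace B r W ∧ Module.finrank ℝ V < Module.finrank ℝ W},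
      Xi2 B ρ r α W

/-- The standing conditions on the parameters ρ ≥ 1, r, κ > 0 and the exponents α_j:
0 = α₀, α_{n+1} > α_n + 2κd², α_d < 1, r ≤ ρ^κ, and r ≥ r₀ (i.e. Θ_r⁰ spans ℝ^d). -/
def GoodParams (B : Basis (Fin d) ℝ (EuclideanSpace ℝ (Fin d))) (ρ r κ : ℝ)
    (α : ℕ → ℝ) : Prop :=
  1 ≤ ρ ∧ 0 < κ ∧ α 0 = 0 ∧ (∀ n < d, α n + 2 * κ * (d : ℝ) ^ 2 < α (n + 1)) ∧
    α d < 1 ∧ r ≤ ρ ^ κ ∧ Submodule.span ℝ (Theta0 B r) = ⊤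

/-!
A basis of dual lattice vectors and the basis of the lattice have determinants whose product is a
nonzero integer multiple of `(2π)^d`. By Cramer's rule and Hadamard's inequality, a dual lattice
vector of norm at most `r` outside a lattice `r`-subspace `V` therefore makes with `V` an angle of
sine at least `1 / G`, where `G = O(r^d)`, and adjoining it to `V` enlarges the projection of a
point by a factor of at most `1 + 2G`. Hence the projection of the end points of a resonance chain
onto the span `U` of its steps is at most `(2G + 3)^(dim U) ρ^(α 1)`. Since the exponents `α n`
leave room for such factors, a chain that starts in `Ξ₁(V)` and leaves `V` in the direction `θ`
does so at a point of `Ξ₁(V + ℝθ)`, which is impossible for points of `Ξ(V)`. The same argument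
excludes that two regions of equal dimension meet.
-/

lemma exists_basis_coord_eq_zero_of_notMem_span {ι K M : Type*} [DivisionRing K] [AddCommGroup M]
    [Module K M] (b : Basis ι K M) {s t : Set M} {x : M} (hst : s ⊆ t) (ht : span K t = ⊤)
    (hx : x ∈ t) (hxs : x ∉ span K s) :
    ∃ (v : Basis ι K M) (i : ι),
      (∀ j, v j ∈ t) ∧ v i = x ∧ ∀ u ∈ span K s, v.coord i u = 0 := by
  obtain ⟨s', hs's, hspan, hs'⟩ := exists_linearIndependent K s
  have hins : LinearIndepOn K id (insert x s') := LinearIndepOn.id_insert hs' (by rwa [hspan])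
  obtain ⟨t', ht't, hinst', htt', ht'⟩ :=
    exists_linearIndepOn_id_extension hins (insert_subset hx (hs's.trans hst))
  have htop : span K t' = ⊤ := top_unique (ht ▸ span_le.2 htt')
  let c : Basis t' K M := Basis.mk (v := (Subtype.val : t' → M)) ht' (by simp [htop])
  have hc (y : t') : c y = y := Basis.mk_apply _ _ y
  let k : t' := ⟨x, hinst' (mem_insert x s')⟩
  refine ⟨c.reindex (c.indexEquiv b), c.indexEquiv b k, fun j => ?_, ?_, fun u hu => ?_⟩
  · rw [Basis.reindex_apply, hc]
    exact ht't (Subtype.coe_prop _)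
  · rw [Basis.reindex_apply, Equiv.symm_apply_apply, hc]
  · have hle : span K s ≤ LinearMap.ker (c.coord k) := by
      rw [← hspan, span_le]
      intro y hy
      have hyx : (⟨y, hinst' (mem_insert_of_mem x hy)⟩ : t') ≠ k := by
        intro h
        obtain rfl : y = x := congrArg Subtype.val h
        exact hxs (subset_span (hs's hy))
      exact Basis.mk_coord_apply_ne hyx
    simpa using hle hu

lemma abs_det_le_prod_norm {n : ℕ} {E : Type*} [NormedAddCommGroup E] [InnerProductSpace ℝ E]
    (e : OrthonormalBasis (Fin n) ℝ E) (v : Fin n → E) : |e.toBasis.det v| ≤ ∏ i, ‖v i‖ := by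
  have : Fact (finrank ℝ E = n) := ⟨by simpa using finrank_eq_card_basis e.toBasis⟩
  rw [← e.toBasis.orientation.volumeForm_robust' e]
  exact e.toBasis.orientation.abs_volumeForm_apply_le v

lemma det_mul_det_eq_det_inner {ι E : Type*} [Fintype ι] [DecidableEq ι] [NormedAddCommGroup E]
    [InnerProductSpace ℝ E] (e : OrthonormalBasis ι ℝ E) (v w : ι → E) :
    e.toBasis.det v * e.toBasis.det w = (Matrix.of fun i j => ⟪v i, w j⟫).det := by
  rw [Basis.det_apply, Basis.det_apply, ← Matrix.det_transpose, ← Matrix.det_mul]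
  congr 1
  ext i j
  rw [Matrix.of_apply, ← e.sum_inner_mul_inner (v i) (w j), Matrix.mul_apply]
  refine Finset.sum_congr rfl fun k _ => ?_
  rw [Matrix.transpose_apply, Basis.toMatrix_apply, Basis.toMatrix_apply,
    e.coe_toBasis_repr_apply, e.coe_toBasis_repr_apply, e.repr_apply_apply, e.repr_apply_apply,
    real_inner_comm]

lemma one_le_latDet_mul_abs_det {B : Basis (Fin d) ℝ (EuclideanSpace ℝ (Fin d))}
    {v : Basis (Fin d) ℝ (EuclideanSpace ℝ (Fin d))} (hv : ∀ i, v i ∈ dualLattice B) :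
    1 ≤ latDet B * |(EuclideanSpace.basisFun (Fin d) ℝ).toBasis.det v| := by
  set e := EuclideanSpace.basisFun (Fin d) ℝ
  choose k hk using fun i j => hv i (B j) (subset_span ⟨j, rfl⟩)
  have hdet : e.toBasis.det v * e.toBasis.det B = (2 * Real.pi) ^ d * ((Matrix.of k).det : ℝ) := by
    have hmat : (Matrix.of fun i j => ⟪v i, B j⟫) =
        (2 * Real.pi) • (Matrix.of k).map (Int.cast : ℤ → ℝ) := by
      ext i j
      simp [hk]
    rw [det_mul_det_eq_det_inner, hmat, Matrix.det_smul, Fintype.card_fin, Int.cast_det]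
  have hne : (Matrix.of k).det ≠ 0 := by
    intro h
    rw [h, Int.cast_zero, mul_zero] at hdet
    exact mul_ne_zero (e.toBasis.isUnit_det v).ne_zero (e.toBasis.isUnit_det B).ne_zero hdet
  calc (1 : ℝ) ≤ (2 * Real.pi) ^ d * |((Matrix.of k).det : ℝ)| :=
        one_le_mul_of_one_le_of_one_le (one_le_pow₀ (by linarith [Real.pi_gt_three]))
          (mod_cast Int.one_le_abs hne)
    _ = |e.toBasis.det v * e.toBasis.det B| := by
        rw [hdet, abs_mul, abs_of_nonneg (pow_nonneg Real.two_pi_pos.le d)]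
    _ = latDet B * |e.toBasis.det v| := by rw [abs_mul, mul_comm]; rfl

lemma abs_coord_le {B v : Basis (Fin d) ℝ (EuclideanSpace ℝ (Fin d))} {R : ℝ}
    (hv : ∀ j, v j ∈ Theta0 B R) (i : Fin d) (x : EuclideanSpace ℝ (Fin d)) :
    |v.coord i x| ≤ latDet B * (‖x‖ * R ^ (d - 1)) := by
  set e := EuclideanSpace.basisFun (Fin d) ℝ
  have hL : 0 ≤ latDet B := abs_nonneg _
  have hcramer : e.toBasis.det v * v.coord i x = e.toBasis.det (Function.update v i x) := by
    have hmk : Basis.mk v.linearIndependent v.span_eq.ge = v :=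
      Basis.eq_of_apply_eq fun j => Basis.mk_apply _ _ j
    have h := LinearMap.congr_fun
      (e.toBasis.det_smul_mk_coord_eq_det_update v.linearIndependent v.span_eq.ge i) x
    rwa [hmk] at h
  have hprod : ∏ j, ‖Function.update v i x j‖ ≤ ‖x‖ * R ^ (d - 1) := by
    rw [← Finset.mul_prod_erase Finset.univ _ (Finset.mem_univ i), Function.update_self]
    gcongr
    calc ∏ j ∈ Finset.univ.erase i, ‖Function.update v i x j‖ ≤ ∏ _j ∈ Finset.univ.erase i, R :=
          Finset.prod_le_prod (fun _ _ => norm_nonneg _) fun j hj => by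
            rw [Function.update_of_ne (Finset.ne_of_mem_erase hj)]
            exact (hv j).2
      _ = R ^ (d - 1) := by
          rw [Finset.prod_const, Finset.card_erase_of_mem (Finset.mem_univ i), Finset.card_fin]
  calc |v.coord i x| ≤ latDet B * |e.toBasis.det v| * |v.coord i x| :=
        le_mul_of_one_le_left (abs_nonneg _) (one_le_latDet_mul_abs_det fun j => (hv j).1)
    _ = latDet B * |e.toBasis.det (Function.update v i x)| := by
        rw [mul_assoc, ← abs_mul, hcramer]
    _ ≤ latDet B * (‖x‖ * R ^ (d - 1)) :=
        mul_le_mul_of_nonneg_left ((abs_det_le_prod_norm e _).trans hprod) hL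

lemma exists_span_Theta0_eq_top (B : Basis (Fin d) ℝ (EuclideanSpace ℝ (Fin d))) :
    ∃ R₀, 1 ≤ R₀ ∧ ∀ R, R₀ ≤ R → span ℝ (Theta0 B R) = ⊤ := by
  let c : Fin d → EuclideanSpace ℝ (Fin d) := fun i =>
    (InnerProductSpace.toDual ℝ _).symm (LinearMap.toContinuousLinearMap (B.coord i))
  have hc : ∀ i x, ⟪c i, x⟫ = B.repr x i := fun i x => InnerProductSpace.toDual_symm_apply
  have hdual : ∀ i, (2 * Real.pi) • c i ∈ dualLattice B := by
    intro i g hg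
    obtain ⟨k, hk⟩ := (B.mem_span_iff_repr_mem ℤ g).1 hg i
    exact ⟨k, by rw [real_inner_smul_left, hc, ← hk]; rfl⟩
  have hspan : span ℝ (range c) = ⊤ := by
    rw [← orthogonal_eq_bot_iff, eq_bot_iff]
    intro x hx
    refine (mem_bot ℝ).2 (B.ext_elem fun i => ?_)
    rw [← hc, (mem_orthogonal _ _).1 hx _ (subset_span ⟨i, rfl⟩)]
    simp
  have hnorm : ∀ i, ‖(2 * Real.pi) • c i‖ ≤ ∑ j, ‖(2 * Real.pi) • c j‖ := fun i =>
    Finset.single_le_sum (f := fun j => ‖(2 * Real.pi) • c j‖) (fun _ _ => norm_nonneg _)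
      (Finset.mem_univ i)
  refine ⟨1 + ∑ j, ‖(2 * Real.pi) • c j‖, le_add_of_nonneg_right (by positivity),
    fun R hR => ?_⟩
  rw [← top_le_iff, ← hspan, span_le]
  rintro _ ⟨i, rfl⟩
  exact (smul_mem_iff _ Real.two_pi_pos.ne').1
    (subset_span ⟨hdual i, by linarith [hnorm i]⟩)

lemma Theta0_mono (B : Basis (Fin d) ℝ (EuclideanSpace ℝ (Fin d))) {r R : ℝ} (h : r ≤ R) :
    Theta0 B r ⊆ Theta0 B R :=
  fun _ hθ => ⟨hθ.1, hθ.2.trans h⟩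

lemma norm_le_mul_norm_starProjection_orthogonal
    {B : Basis (Fin d) ℝ (EuclideanSpace ℝ (Fin d))} {R : ℝ} (hR : span ℝ (Theta0 B R) = ⊤)
    {V : Submodule ℝ (EuclideanSpace ℝ (Fin d))} (hV : IsLatticeSubspace B R V)
    {θ : EuclideanSpace ℝ (Fin d)} (hθ : θ ∈ Theta0 B R) (hθV : θ ∉ V) :
    ‖θ‖ ≤ latDet B * R ^ d * ‖Vᗮ.starProjection θ‖ := by
  obtain ⟨S, hS, rfl⟩ := hV
  obtain ⟨v, i, hv, hvi, hcoord⟩ :=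
    exists_basis_coord_eq_zero_of_notMem_span (EuclideanSpace.basisFun (Fin d) ℝ).toBasis
      hS hR hθ hθV
  have hone : v.coord i ((span ℝ S)ᗮ.starProjection θ) = 1 := by
    rw [starProjection_orthogonal_val, map_sub, hcoord _ (starProjection_apply_mem _ _), sub_zero,
      ← hvi, Basis.coord_apply, Basis.repr_self, Finsupp.single_eq_same]
  have hcoord_le := abs_coord_le hv i ((span ℝ S)ᗮ.starProjection θ)
  rw [hone, abs_one] at hcoord_le
  have hR0 : 0 ≤ R := (norm_nonneg θ).trans hθ.2
  calc ‖θ‖ ≤ R * 1 := by rw [mul_one]; exact hθ.2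
    _ ≤ R * (latDet B * (‖(span ℝ S)ᗮ.starProjection θ‖ * R ^ (d - 1))) := by gcongr
    _ = latDet B * R ^ (d - 1 + 1) * ‖(span ℝ S)ᗮ.starProjection θ‖ := by ring
    _ = latDet B * R ^ d * ‖(span ℝ S)ᗮ.starProjection θ‖ := by rw [Nat.sub_add_cancel i.pos]

/-- Every vector of `Theta0 B r` outside a lattice `r`-subspace makes an angle of sine at least
`1 / G` with it. -/
structure AngleBound (B : Basis (Fin d) ℝ (EuclideanSpace ℝ (Fin d))) (r G : ℝ) : Prop where
  nonneg : 0 ≤ G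
  norm_le : ∀ V, IsLatticeSubspace B r V → ∀ θ ∈ Theta0 B r, θ ∉ V →
    ‖θ‖ ≤ G * ‖Vᗮ.starProjection θ‖

lemma exists_angleBound (B : Basis (Fin d) ℝ (EuclideanSpace ℝ (Fin d))) :
    ∃ C, 0 ≤ C ∧ ∀ r, AngleBound B r (C * max 1 r ^ d) := by
  obtain ⟨R₀, hR₀, hspan⟩ := exists_span_Theta0_eq_top B
  have hC : 0 ≤ latDet B * R₀ ^ d := mul_nonneg (abs_nonneg _) (by positivity)
  refine ⟨latDet B * R₀ ^ d, hC, fun r => ⟨by positivity, ?_⟩⟩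
  rintro V ⟨S, hS, hVS⟩ θ hθ hθV
  have hmono : Theta0 B r ⊆ Theta0 B (R₀ * max 1 r) :=
    Theta0_mono B ((le_max_right 1 r).trans (le_mul_of_one_le_left (by positivity) hR₀))
  have hR : R₀ ≤ R₀ * max 1 r := le_mul_of_one_le_right (by positivity) (le_max_left 1 r)
  rw [mul_assoc (latDet B), ← mul_pow]
  exact norm_le_mul_norm_starProjection_orthogonal (hspan _ hR) ⟨S, hS.trans hmono, hVS⟩
    (hmono hθ) hθV

section Projection

variable {E : Type*} [NormedAddCommGroup E] [InnerProductSpace ℝ E]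

lemma abs_inner_le_norm_starProjection_mul_norm {V : Submodule ℝ E} [V.HasOrthogonalProjection]
    {x v : E} (hv : v ∈ V) : |⟪x, v⟫| ≤ ‖V.starProjection x‖ * ‖v‖ := by
  rw [← starProjection_eq_self_iff.2 hv, ← V.inner_starProjection_left_eq_right,
    starProjection_eq_self_iff.2 hv]
  exact abs_real_inner_le_norm _ v

lemma norm_sub_le_of_sub_mem {U : Submodule ℝ E} [U.HasOrthogonalProjection] {x y : E}
    (h : x - y ∈ U) : ‖x - y‖ ≤ ‖U.starProjection x‖ + ‖U.starProjection y‖ := by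
  rw [← starProjection_eq_self_iff.2 h, map_sub]
  exact norm_sub_le _ _

lemma norm_starProjection_le_add_norm_sub (U : Submodule ℝ E) [U.HasOrthogonalProjection]
    (x y : E) : ‖U.starProjection x‖ ≤ ‖U.starProjection y‖ + ‖x - y‖ :=
  calc ‖U.starProjection x‖ = ‖U.starProjection y + U.starProjection (x - y)‖ := by
        rw [← map_add, add_sub_cancel]
    _ ≤ ‖U.starProjection y‖ + ‖x - y‖ :=
        (norm_add_le _ _).trans (by gcongr; exact U.norm_starProjection_apply_le _)

lemma norm_starProjection_le_of_forall_inner_le {W : Submodule ℝ E} [W.HasOrthogonalProjection]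
    {x : E} {C : ℝ} (hC : 0 ≤ C) (h : ∀ w ∈ W, ⟪x, w⟫ ≤ C * ‖w‖) : ‖W.starProjection x‖ ≤ C := by
  have hsq : ‖W.starProjection x‖ * ‖W.starProjection x‖ ≤ C * ‖W.starProjection x‖ := by
    have hmem := starProjection_apply_mem W x
    rw [← real_inner_self_eq_norm_mul_norm, inner_starProjection_left_eq_right,
      starProjection_eq_self_iff.2 hmem]
    exact h _ hmem
  rcases (norm_nonneg (W.starProjection x)).eq_or_lt with h0 | hpos
  · rwa [← h0]
  · exact le_of_mul_le_mul_right hsq hpos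

lemma exists_starProjection_orthogonal_eq_smul {V : Submodule ℝ E} [V.HasOrthogonalProjection]
    {θ w : E} (hw : w ∈ V ⊔ span ℝ {θ}) :
    ∃ t : ℝ, Vᗮ.starProjection w = t • Vᗮ.starProjection θ := by
  obtain ⟨u, hu, z, hz, rfl⟩ := mem_sup.1 hw
  obtain ⟨t, rfl⟩ := mem_span_singleton.1 hz
  refine ⟨t, ?_⟩
  rw [map_add, map_smul, starProjection_orthogonal_val, starProjection_eq_self_iff.2 hu, sub_self,
    zero_add]

lemma norm_starProjection_sup_span_singleton_le {V : Submodule ℝ E} {θ x : E}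
    [V.HasOrthogonalProjection] [(V ⊔ span ℝ {θ}).HasOrthogonalProjection] {G M : ℝ} (hG : 0 ≤ G)
    (hθ : ‖θ‖ ≤ G * ‖Vᗮ.starProjection θ‖) (hx : ‖V.starProjection x‖ ≤ M)
    (hxθ : |⟪x, θ⟫| ≤ M * ‖θ‖) :
    ‖(V ⊔ span ℝ {θ}).starProjection x‖ ≤ (1 + 2 * G) * M := by
  have hM : 0 ≤ M := (norm_nonneg _).trans hx
  refine norm_starProjection_le_of_forall_inner_le (by positivity) fun w hw => ?_
  obtain ⟨t, horth⟩ := exists_starProjection_orthogonal_eq_smul hw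
  have ht : |t| * ‖θ‖ ≤ G * ‖w‖ :=
    calc |t| * ‖θ‖ ≤ |t| * (G * ‖Vᗮ.starProjection θ‖) := by gcongr
      _ = G * ‖Vᗮ.starProjection w‖ := by rw [horth, norm_smul, Real.norm_eq_abs]; ring
      _ ≤ G * ‖w‖ := by gcongr; exact Vᗮ.norm_starProjection_apply_le w
  have hsplit : ⟪x, w⟫ = ⟪V.starProjection x, w⟫ + t * (⟪x, θ⟫ - ⟪V.starProjection x, θ⟫) := by
    rw [V.inner_starProjection_left_eq_right, V.inner_starProjection_left_eq_right,
      ← inner_sub_right, ← starProjection_orthogonal_val, ← real_inner_smul_right, ← horth,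
      ← inner_add_right, starProjection_orthogonal_val, add_sub_cancel]
  have hV (y : E) : |⟪V.starProjection x, y⟫| ≤ M * ‖y‖ :=
    (abs_real_inner_le_norm _ y).trans (by gcongr)
  calc ⟪x, w⟫ ≤ |⟪V.starProjection x, w⟫| + |t| * (|⟪x, θ⟫| + |⟪V.starProjection x, θ⟫|) := by
        rw [hsplit]
        refine (le_abs_self _).trans ((abs_add_le _ _).trans ?_)
        rw [abs_mul]
        gcongr
        exact abs_sub _ _
    _ ≤ M * ‖w‖ + |t| * (M * ‖θ‖ + M * ‖θ‖) := by gcongr <;> exact hV _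
    _ = M * (‖w‖ + 2 * (|t| * ‖θ‖)) := by ring
    _ ≤ M * (‖w‖ + 2 * (G * ‖w‖)) := by gcongr
    _ = (1 + 2 * G) * M * ‖w‖ := by ring

end Projection

section Chains

variable {B : Basis (Fin d) ℝ (EuclideanSpace ℝ (Fin d))} {ρ a r G : ℝ}
  {U V : Submodule ℝ (EuclideanSpace ℝ (Fin d))} {x y z θ : EuclideanSpace ℝ (Fin d)}

lemma mem_upsTheta_symm (h : y ∈ upsTheta ρ a θ x) : x ∈ upsTheta ρ a θ y := by
  obtain ⟨hx, hy, l, hl⟩ := h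
  exact ⟨hy, hx, -l, by rw [← neg_sub, hl, Int.cast_neg, neg_smul]⟩

lemma mem_Ups_symm (h : y ∈ Ups B ρ a r x) : x ∈ Ups B ρ a r y :=
  have : Std.Symm (resStep B ρ a r) :=
    ⟨fun _ _ ⟨θ, hθ, hstep⟩ => ⟨θ, hθ, mem_upsTheta_symm hstep⟩⟩
  ReflTransGen.stdSymm.symm _ _ h

lemma IsLatticeSubspace.bot : IsLatticeSubspace B r ⊥ :=
  ⟨∅, empty_subset _, span_empty.symm⟩

lemma IsLatticeSubspace.sup_span_singleton (hV : IsLatticeSubspace B r V) (hθ : θ ∈ Theta0 B r) :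
    IsLatticeSubspace B r (V ⊔ span ℝ {θ}) := by
  obtain ⟨S, hS, rfl⟩ := hV
  exact ⟨S ∪ {θ}, union_subset hS (singleton_subset_iff.2 hθ), (span_union S {θ}).symm⟩

/-- `ResChain B ρ a r U x y` says that a chain of resonant congruences leads from `x` to `y`
through nonzero vectors `θ` of `Theta0 B r` spanning `U`. -/
inductive ResChain (B : Basis (Fin d) ℝ (EuclideanSpace ℝ (Fin d))) (ρ a r : ℝ) :
    Submodule ℝ (EuclideanSpace ℝ (Fin d)) → EuclideanSpace ℝ (Fin d) →
      EuclideanSpace ℝ (Fin d) → Prop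
  | refl (x : EuclideanSpace ℝ (Fin d)) : ResChain B ρ a r ⊥ x x
  | tail {U : Submodule ℝ (EuclideanSpace ℝ (Fin d))} {x y z θ : EuclideanSpace ℝ (Fin d)} :
      ResChain B ρ a r U x y → θ ∈ Theta0 B r → θ ≠ 0 → z ∈ upsTheta ρ a θ y →
      ResChain B ρ a r (U ⊔ span ℝ {θ}) x z

namespace ResChain

lemma head (h : ResChain B ρ a r U y z) (hθ : θ ∈ Theta0 B r) (hθ0 : θ ≠ 0)
    (hstep : y ∈ upsTheta ρ a θ x) : ResChain B ρ a r (U ⊔ span ℝ {θ}) x z := by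
  induction h with
  | refl y => exact (refl x).tail hθ hθ0 hstep
  | tail _ hτ hτ0 hlast ih =>
    rw [sup_right_comm]
    exact (ih hstep).tail hτ hτ0 hlast

lemma symm (h : ResChain B ρ a r U x y) : ResChain B ρ a r U y x := by
  induction h with
  | refl x => exact refl x
  | tail _ hθ hθ0 hlast ih => exact ih.head hθ hθ0 (mem_upsTheta_symm hlast)

lemma isLatticeSubspace (h : ResChain B ρ a r U x y) : IsLatticeSubspace B r U := by
  induction h with
  | refl => exact .bot
  | tail _ hθ _ _ ih => exact ih.sup_span_singleton hθ

lemma sub_mem (h : ResChain B ρ a r U x y) : x - y ∈ U := by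
  induction h with
  | refl x => exact (sub_self x).symm ▸ zero_mem ⊥
  | @tail U x y z θ _ _ _ hlast ih =>
    obtain ⟨-, -, l, hl⟩ := hlast
    rw [← sub_add_sub_cancel x y z, hl]
    exact add_mem_sup ih (smul_mem _ _ (mem_span_singleton_self θ))

lemma exists_eq_sup_span_singleton (h : ResChain B ρ a r U x z) (hU : U ≠ ⊥) :
    ∃ U' y θ, ResChain B ρ a r U' x y ∧ θ ∈ Theta0 B r ∧ θ ∉ U' ∧
      |⟪y, θ⟫| ≤ ρ ^ a * ‖θ‖ ∧ U = U' ⊔ span ℝ {θ} := by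
  induction h with
  | refl => exact absurd rfl hU
  | @tail U x y z θ hchain hθ hθ0 hlast ih =>
    by_cases hθU : θ ∈ U
    · rw [sup_eq_left.2 ((span_singleton_le_iff_mem _ _).2 hθU)] at hU ⊢
      exact ih hU
    · exact ⟨U, y, θ, hchain, hθ, hθU, (hlast.1.resolve_left hθ0).le, rfl⟩

lemma norm_starProjection_le (hG : AngleBound B r G) (hρ : 0 ≤ ρ) (h : ResChain B ρ a r U x z) :
    ‖U.starProjection x‖ ≤ (2 * G + 3) ^ finrank ℝ U * ρ ^ a := by
  have hG0 := hG.nonneg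
  obtain ⟨n, hn⟩ : ∃ n, finrank ℝ U = n := ⟨_, rfl⟩
  induction n generalizing U x z with
  | zero =>
    rw [(finrank_eq_zero (S := U)).1 hn, starProjection_bot]
    simp [Real.rpow_nonneg hρ]
  | succ n ih =>
    have hU : U ≠ ⊥ := by
      rintro rfl
      simp at hn
    obtain ⟨U', y, θ, hchain, hθ, hθU, hyθ, rfl⟩ := h.exists_eq_sup_span_singleton hU
    rw [finrank_sup_span_singleton hθU] at hn ⊢
    have hn' : finrank ℝ U' = n := Nat.succ_injective hn
    have hx := ih hchain hn'
    have hy := ih hchain.symm hn'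
    rw [hn'] at hx hy ⊢
    set M := (2 * G + 3) ^ n * ρ ^ a with hM
    have hyM : |⟪y, θ⟫| ≤ M * ‖θ‖ := hyθ.trans (by
      gcongr
      exact le_mul_of_one_le_left (Real.rpow_nonneg hρ a) (one_le_pow₀ (by linarith)))
    calc ‖(U' ⊔ span ℝ {θ}).starProjection x‖
        ≤ ‖(U' ⊔ span ℝ {θ}).starProjection y‖ + ‖x - y‖ :=
          norm_starProjection_le_add_norm_sub _ x y
      _ ≤ (1 + 2 * G) * M + (M + M) := add_le_add
          (norm_starProjection_sup_span_singleton_le hG0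
            (hG.norm_le _ hchain.isLatticeSubspace θ hθ hθU) hy hyM)
          ((norm_sub_le_of_sub_mem hchain.sub_mem).trans (add_le_add hx hy))
      _ = (2 * G + 3) ^ (n + 1) * ρ ^ a := by rw [hM]; ring

end ResChain

end Chains

section ResonanceRegions

variable {B : Basis (Fin d) ℝ (EuclideanSpace ℝ (Fin d))} {ρ r G : ℝ} {α : ℕ → ℝ}
  {U V V₁ V₂ : Submodule ℝ (EuclideanSpace ℝ (Fin d))} {ξ η θ : EuclideanSpace ℝ (Fin d)}

lemma mem_Xi1 : ξ ∈ Xi1 ρ α V ↔ ‖V.starProjection ξ‖ < ρ ^ α (finrank ℝ V) :=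
  Iff.rfl

lemma mem_Xi1_span_singleton (hθ : θ ≠ 0) (hη : η ∈ layer ρ (α 1) θ) :
    η ∈ Xi1 ρ α (span ℝ {θ}) := by
  rw [mem_Xi1, finrank_span_singleton hθ]
  calc ‖(span ℝ {θ}).starProjection η‖ = |⟪η, θ⟫| / ‖θ‖ ^ 2 * ‖θ‖ := by
        rw [starProjection_singleton, norm_smul, norm_div, real_inner_comm]
        simp
    _ = |⟪η, θ⟫| / ‖θ‖ := by field
    _ < ρ ^ α 1 := (div_lt_iff₀ (norm_pos_iff.2 hθ)).2 (hη.resolve_left hθ)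

lemma mem_Xi2_bot (hρ : 0 < ρ) : ξ ∈ Xi2 B ρ r α ⊥ := by
  refine ⟨ξ, mem_Xi1.2 ?_, .refl⟩
  rw [starProjection_bot, zero_apply, norm_zero]
  exact Real.rpow_pos_of_pos hρ _

lemma mem_Xi2_of_mem_Ups (hξ : ξ ∈ Xi2 B ρ r α V) (hη : η ∈ Ups B ρ (α 1) r ξ) :
    η ∈ Xi2 B ρ r α V := by
  obtain ⟨ζ, hζ, hζξ⟩ := hξ
  exact ⟨ζ, hζ, hζξ.trans hη⟩

lemma mem_Xi_iff : ξ ∈ Xi B ρ r α V ↔ ξ ∈ Xi2 B ρ r α V ∧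
    ∀ W, IsLatticeSubspace B r W → ξ ∈ Xi2 B ρ r α W → finrank ℝ W ≤ finrank ℝ V := by
  simp only [Xi, mem_sdiff, mem_iUnion₂, not_exists, mem_ofPred_eq, and_imp, ← not_lt]
  tauto

lemma exists_mem_Xi (hρ : 0 < ρ) (ξ : EuclideanSpace ℝ (Fin d)) :
    ∃ V, IsLatticeSubspace B r V ∧ ξ ∈ Xi B ρ r α V := by
  let s : Set (Submodule ℝ (EuclideanSpace ℝ (Fin d))) :=
    {V | IsLatticeSubspace B r V ∧ ξ ∈ Xi2 B ρ r α V}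
  let dim : Submodule ℝ (EuclideanSpace ℝ (Fin d)) → ℕ := fun V => finrank ℝ V
  have hfin : (dim '' s).Finite :=
    (finite_Iic (finrank ℝ (EuclideanSpace ℝ (Fin d)))).subset
      (image_subset_iff.2 fun V _ => V.finrank_le)
  obtain ⟨V, ⟨hV, hξV⟩, hmax⟩ := Set.Finite.exists_maximalFor' dim s hfin
    ⟨⊥, .bot, mem_Xi2_bot hρ⟩
  refine ⟨V, hV, mem_Xi_iff.2 ⟨hξV, fun W hW hξW => ?_⟩⟩
  exact le_of_not_gt fun hlt => hlt.not_ge (hmax ⟨hW, hξW⟩ hlt.le)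

lemma Ups_subset_Xi (hξ : ξ ∈ Xi B ρ r α V) : Ups B ρ (α 1) r ξ ⊆ Xi B ρ r α V := by
  rw [mem_Xi_iff] at hξ
  exact fun η hη => mem_Xi_iff.2 ⟨mem_Xi2_of_mem_Ups hξ.1 hη,
    fun W hW hηW => hξ.2 W hW (mem_Xi2_of_mem_Ups hηW (mem_Ups_symm hη))⟩

lemma mem_of_mem_Xi1_sup_span_singleton (hV : IsLatticeSubspace B r V) (hξ : ξ ∈ Xi B ρ r α V)
    (hη : η ∈ Ups B ρ (α 1) r ξ) (hθ : θ ∈ Theta0 B r) (hηθ : η ∈ Xi1 ρ α (V ⊔ span ℝ {θ})) :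
    θ ∈ V := by
  by_contra hθV
  have hle := (mem_Xi_iff.1 hξ).2 _ (hV.sup_span_singleton hθ) ⟨η, hηθ, mem_Ups_symm hη⟩
  rw [finrank_sup_span_singleton hθV] at hle
  exact Nat.not_succ_le_self _ hle

/-- The parameters are separated well enough for the resonance regions to be disjoint: `G` bounds
the angles as in `AngleBound`, and each `ρ ^ α (n + 1)` exceeds `ρ ^ α n` by the factor which the
projections of a point may gain along a resonance chain. -/
structure SeparatedScales (B : Basis (Fin d) ℝ (EuclideanSpace ℝ (Fin d))) (ρ r : ℝ) (α : ℕ → ℝ)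
    (G : ℝ) : Prop extends AngleBound B r G where
  rho_pos : 0 < ρ
  gap : ∀ n, 1 ≤ n → n < d → 3 * (2 * G + 3) ^ d * ρ ^ α n ≤ ρ ^ α (n + 1)

namespace SeparatedScales

lemma rpow_one_le_rpow_finrank (h : SeparatedScales B ρ r α G) (hV : 1 ≤ finrank ℝ V) :
    ρ ^ α 1 ≤ ρ ^ α (finrank ℝ V) := by
  have hG := h.nonneg
  have hle : ∀ n, 1 ≤ n → n ≤ d → ρ ^ α 1 ≤ ρ ^ α n := by
    intro n hn
    induction n, hn using Nat.le_induction with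
    | base => exact fun _ => le_rfl
    | succ n hn ih =>
      intro hnd
      have hfactor : 1 ≤ 3 * (2 * G + 3) ^ d :=
        one_le_mul_of_one_le_of_one_le (by norm_num) (one_le_pow₀ (by linarith))
      exact (ih (by omega)).trans ((le_mul_of_one_le_left
        (Real.rpow_nonneg h.rho_pos.le _) hfactor).trans (h.gap n hn hnd))
  exact hle _ hV (V.finrank_le.trans_eq finrank_euclideanSpace_fin)

lemma norm_starProjection_le_of_resChain (h : SeparatedScales B ρ r α G) (hV : 1 ≤ finrank ℝ V)
    (hξ : ξ ∈ Xi1 ρ α V) (hchain : ResChain B ρ (α 1) r U ξ η) (hUV : U ≤ V) :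
    ‖V.starProjection η‖ ≤ 3 * (2 * G + 3) ^ finrank ℝ V * ρ ^ α (finrank ℝ V) := by
  have hG := h.nonneg
  have hρα : 0 ≤ ρ ^ α (finrank ℝ V) := Real.rpow_nonneg h.rho_pos.le _
  have hfactor : (2 * G + 3) ^ finrank ℝ U * ρ ^ α 1 ≤
      (2 * G + 3) ^ finrank ℝ V * ρ ^ α (finrank ℝ V) :=
    mul_le_mul (pow_le_pow_right₀ (by linarith) (finrank_mono hUV))
      (h.rpow_one_le_rpow_finrank hV) (Real.rpow_nonneg h.rho_pos.le _) (by positivity)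
  have hξU := (hchain.norm_starProjection_le h.toAngleBound h.rho_pos.le).trans hfactor
  have hηU := (hchain.symm.norm_starProjection_le h.toAngleBound h.rho_pos.le).trans hfactor
  calc ‖V.starProjection η‖ ≤ ‖V.starProjection ξ‖ + ‖η - ξ‖ :=
        norm_starProjection_le_add_norm_sub V η ξ
    _ ≤ (2 * G + 3) ^ finrank ℝ V * ρ ^ α (finrank ℝ V) +
        ((2 * G + 3) ^ finrank ℝ V * ρ ^ α (finrank ℝ V) +
          (2 * G + 3) ^ finrank ℝ V * ρ ^ α (finrank ℝ V)) :=
        add_le_add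
          ((mem_Xi1.1 hξ).le.trans (le_mul_of_one_le_left hρα (one_le_pow₀ (by linarith))))
          ((norm_sub_le_of_sub_mem hchain.symm.sub_mem).trans (add_le_add hηU hξU))
    _ = 3 * (2 * G + 3) ^ finrank ℝ V * ρ ^ α (finrank ℝ V) := by ring

lemma mem_Xi1_sup_span_singleton (h : SeparatedScales B ρ r α G) (hV : IsLatticeSubspace B r V)
    (hV1 : 1 ≤ finrank ℝ V) (hξ : ξ ∈ Xi1 ρ α V) (hchain : ResChain B ρ (α 1) r U ξ η)
    (hUV : U ≤ V) (hθ : θ ∈ Theta0 B r) (hθV : θ ∉ V)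
    (hηθ : |⟪η, θ⟫| ≤ ρ ^ α (finrank ℝ V) * ‖θ‖) : η ∈ Xi1 ρ α (V ⊔ span ℝ {θ}) := by
  have hG := h.nonneg
  have hfin := finrank_sup_span_singleton hθV
  have hlt : finrank ℝ V < d := by
    rw [← Nat.succ_le_iff, ← Nat.add_one, ← hfin]
    exact (finrank_le _).trans_eq finrank_euclideanSpace_fin
  rw [mem_Xi1, hfin]
  have hηV := h.norm_starProjection_le_of_resChain hV1 hξ hchain hUV
  have hρα : 0 < ρ ^ α (finrank ℝ V) := Real.rpow_pos_of_pos h.rho_pos _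
  generalize finrank ℝ V = n at *
  have hone : 1 ≤ 3 * (2 * G + 3) ^ n :=
    one_le_mul_of_one_le_of_one_le (by norm_num) (one_le_pow₀ (by linarith))
  calc ‖(V ⊔ span ℝ {θ}).starProjection η‖
      ≤ (1 + 2 * G) * (3 * (2 * G + 3) ^ n * ρ ^ α n) :=
        norm_starProjection_sup_span_singleton_le hG (h.norm_le V hV θ hθ hθV) hηV
          (hηθ.trans (by gcongr; exact le_mul_of_one_le_left hρα.le hone))
    _ < (2 * G + 3) * (3 * (2 * G + 3) ^ n * ρ ^ α n) := by gcongr ?_ * _; linarith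
    _ = 3 * (2 * G + 3) ^ (n + 1) * ρ ^ α n := by ring
    _ ≤ 3 * (2 * G + 3) ^ d * ρ ^ α n := by
        gcongr
        · linarith
        · exact hlt
    _ ≤ ρ ^ α (n + 1) := h.gap n hV1 hlt

lemma exists_resChain_le (h : SeparatedScales B ρ r α G) (hV : IsLatticeSubspace B r V)
    (hξ : ξ ∈ Xi B ρ r α V) (hξ1 : ξ ∈ Xi1 ρ α V) (hη : η ∈ Ups B ρ (α 1) r ξ) :
    ∃ U ≤ V, ResChain B ρ (α 1) r U ξ η := by
  induction hη with
  | refl => exact ⟨⊥, bot_le, .refl ξ⟩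
  | @tail η ζ hη hstep ih =>
    obtain ⟨U, hUV, hchain⟩ := ih
    obtain ⟨θ, hθ, hζ⟩ := hstep
    rcases eq_or_ne θ 0 with rfl | hθ0
    · obtain ⟨-, -, l, hl⟩ := hζ
      rw [smul_zero, sub_eq_zero] at hl
      exact ⟨U, hUV, hl ▸ hchain⟩
    have hθV : θ ∈ V := by
      by_contra hθV
      refine hθV (mem_of_mem_Xi1_sup_span_singleton hV hξ hη hθ ?_)
      rcases eq_or_ne V ⊥ with rfl | hVbot
      · rw [bot_sup_eq]
        exact mem_Xi1_span_singleton hθ0 hζ.1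
      · have hV1 : 1 ≤ finrank ℝ V := one_le_finrank_iff.2 hVbot
        exact h.mem_Xi1_sup_span_singleton hV hV1 hξ1 hchain hUV hθ hθV
          ((hζ.1.resolve_left hθ0).le.trans
            (mul_le_mul_of_nonneg_right (h.rpow_one_le_rpow_finrank hV1) (norm_nonneg θ)))
    exact ⟨_, sup_le hUV ((span_singleton_le_iff_mem _ _).2 hθV), hchain.tail hθ hθ0 hζ⟩

lemma resN_subset (h : SeparatedScales B ρ r α G) (hV : IsLatticeSubspace B r V)
    (hξ : ξ ∈ Xi B ρ r α V) : resN B ρ (α 1) r ξ ⊆ V := by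
  intro m hm
  obtain ⟨ζ, hζ, hζξ⟩ := hξ.1
  have hζV : ζ ∈ Xi B ρ r α V := Ups_subset_Xi hξ (mem_Ups_symm hζξ)
  have hsub : ∀ η ∈ Ups B ρ (α 1) r ζ, η - ζ ∈ V := by
    intro η hη
    obtain ⟨U, hUV, hchain⟩ := h.exists_resChain_le hV hζV hζ hη
    exact hUV hchain.symm.sub_mem
  have hmem := V.sub_mem (hsub (ξ + m) (hζξ.trans hm)) (hsub ξ hζξ)
  rwa [sub_sub_sub_cancel_right, add_sub_cancel_left] at hmem

lemma le_of_mem_Xi_of_mem_Xi (h : SeparatedScales B ρ r α G) (hV₁ : IsLatticeSubspace B r V₁)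
    (hV₂ : IsLatticeSubspace B r V₂) (hξ₁ : ξ ∈ Xi B ρ r α V₁) (hξ₂ : ξ ∈ Xi B ρ r α V₂) :
    V₂ ≤ V₁ := by
  have hfin : finrank ℝ V₁ = finrank ℝ V₂ :=
    ((mem_Xi_iff.1 hξ₂).2 V₁ hV₁ hξ₁.1).antisymm ((mem_Xi_iff.1 hξ₁).2 V₂ hV₂ hξ₂.1)
  obtain ⟨ζ₁, hζ₁, hζ₁ξ⟩ := hξ₁.1
  obtain ⟨ζ₂, hζ₂, hζ₂ξ⟩ := hξ₂.1
  have hζ₁V : ζ₁ ∈ Xi B ρ r α V₁ := Ups_subset_Xi hξ₁ (mem_Ups_symm hζ₁ξ)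
  have hζ₁ζ₂ : ζ₂ ∈ Ups B ρ (α 1) r ζ₁ := hζ₁ξ.trans (mem_Ups_symm hζ₂ξ)
  obtain ⟨U, hUV, hchain⟩ := h.exists_resChain_le hV₁ hζ₁V hζ₁ hζ₁ζ₂
  obtain ⟨S, hS, hV₂S⟩ := hV₂
  rw [hV₂S, span_le]
  intro θ hθS
  by_contra hθV₁
  have hθV₂ : θ ∈ V₂ := hV₂S ▸ subset_span hθS
  have hθ0 : θ ≠ 0 := fun hθ0 => hθV₁ (hθ0 ▸ V₁.zero_mem)
  have hV₁1 : 1 ≤ finrank ℝ V₁ :=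
    hfin ▸ one_le_finrank_iff.2 (V₂.ne_bot_iff.2 ⟨θ, hθV₂, hθ0⟩)
  have hinner : |⟪ζ₂, θ⟫| ≤ ρ ^ α (finrank ℝ V₁) * ‖θ‖ := by
    rw [hfin]
    exact (abs_inner_le_norm_starProjection_mul_norm hθV₂).trans
      (by gcongr; exact (mem_Xi1.1 hζ₂).le)
  exact hθV₁ (mem_of_mem_Xi1_sup_span_singleton hV₁ hζ₁V hζ₁ζ₂ (hS hθS)
    (h.mem_Xi1_sup_span_singleton hV₁ hV₁1 hζ₁ hchain hUV (hS hθS) hθV₁ hinner))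

lemma Xi_inter_Xi_eq_empty (h : SeparatedScales B ρ r α G) (hV₁ : IsLatticeSubspace B r V₁)
    (hV₂ : IsLatticeSubspace B r V₂) (hne : V₁ ≠ V₂) : Xi B ρ r α V₁ ∩ Xi B ρ r α V₂ = ∅ :=
  eq_empty_iff_forall_notMem.2 fun _ hξ => hne <|
    (h.le_of_mem_Xi_of_mem_Xi hV₂ hV₁ hξ.2 hξ.1).antisymm
      (h.le_of_mem_Xi_of_mem_Xi hV₁ hV₂ hξ.1 hξ.2)

end SeparatedScales

end ResonanceRegions

lemma GoodParams.mul_rpow_le {B : Basis (Fin d) ℝ (EuclideanSpace ℝ (Fin d))} {ρ r κ K : ℝ}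
    {α : ℕ → ℝ} (h : GoodParams B ρ r κ α) (hρ : |K| ^ (κ * d ^ 2)⁻¹ ≤ ρ) {n : ℕ} (hn : n < d) :
    K * max 1 r ^ d ^ 2 * ρ ^ α n ≤ ρ ^ α (n + 1) := by
  obtain ⟨hρ1, hκ, -, hα, -, hr, -⟩ := h
  have hρ0 : 0 < ρ := one_pos.trans_le hρ1
  have hd : (0 : ℝ) < d := by exact_mod_cast n.zero_le.trans_lt hn
  have hK : K ≤ ρ ^ (κ * (d : ℝ) ^ 2) :=
    (le_abs_self K).trans
      ((Real.rpow_inv_le_iff_of_pos (abs_nonneg K) hρ0.le (by positivity)).1 hρ)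
  have hmax : max 1 r ^ d ^ 2 ≤ ρ ^ (κ * (d : ℝ) ^ 2) :=
    calc max 1 r ^ d ^ 2 ≤ (ρ ^ κ) ^ d ^ 2 := by
          gcongr
          exact max_le (Real.one_le_rpow hρ1 hκ.le) hr
      _ = ρ ^ (κ * (d : ℝ) ^ 2) := by rw [← Real.rpow_mul_natCast hρ0.le, Nat.cast_pow]
  calc K * max 1 r ^ d ^ 2 * ρ ^ α n
      ≤ ρ ^ (κ * (d : ℝ) ^ 2) * ρ ^ (κ * (d : ℝ) ^ 2) * ρ ^ α n := by gcongr
    _ = ρ ^ (α n + 2 * κ * (d : ℝ) ^ 2) := by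
        rw [← Real.rpow_add hρ0, ← Real.rpow_add hρ0]
        ring_nf
    _ ≤ ρ ^ α (n + 1) := Real.rpow_le_rpow_of_exponent_le hρ1 (hα n hn).le

lemma exists_separatedScales (B : Basis (Fin d) ℝ (EuclideanSpace ℝ (Fin d))) :
    ∃ K : ℝ, ∀ (ρ r : ℝ) (α : ℕ → ℝ), 0 < ρ →
      (∀ n, 1 ≤ n → n < d → K * max 1 r ^ d ^ 2 * ρ ^ α n ≤ ρ ^ α (n + 1)) →
      ∃ G, SeparatedScales B ρ r α G := by
  obtain ⟨C, hC, hangle⟩ := exists_angleBound B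
  refine ⟨3 * (2 * C + 3) ^ d, fun ρ r α hρ hgap => ⟨C * max 1 r ^ d, hangle r, hρ, ?_⟩⟩
  intro n hn hnd
  have hmax : 1 ≤ max 1 r ^ d := one_le_pow₀ (le_max_left 1 r)
  refine le_trans ?_ (hgap n hn hnd)
  calc 3 * (2 * (C * max 1 r ^ d) + 3) ^ d * ρ ^ α n
      ≤ 3 * ((2 * C + 3) * max 1 r ^ d) ^ d * ρ ^ α n := by
        gcongr
        linarith
    _ = 3 * (2 * C + 3) ^ d * max 1 r ^ d ^ 2 * ρ ^ α n := by
        rw [mul_pow, ← pow_mul, ← sq, ← mul_assoc 3]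

theorem Xi_partition_general (B : Basis (Fin d) ℝ (EuclideanSpace ℝ (Fin d))) :
    ∃ K : ℝ, ∀ (ρ r : ℝ) (α : ℕ → ℝ), 0 < ρ →
      (∀ n, 1 ≤ n → n < d → K * max 1 r ^ d ^ 2 * ρ ^ α n ≤ ρ ^ α (n + 1)) →
      (∀ ξ, ∃ V, IsLatticeSubspace B r V ∧ ξ ∈ Xi B ρ r α V) ∧
      (∀ V₁ V₂, IsLatticeSubspace B r V₁ → IsLatticeSubspace B r V₂ → V₁ ≠ V₂ →
        Xi B ρ r α V₁ ∩ Xi B ρ r α V₂ = ∅) ∧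
      (∀ V, IsLatticeSubspace B r V → ∀ ξ ∈ Xi B ρ r α V,
        Ups B ρ (α 1) r ξ ⊆ Xi B ρ r α V ∧ resN B ρ (α 1) r ξ ⊆ V) := by
  obtain ⟨K, hK⟩ := exists_separatedScales B
  refine ⟨K, fun ρ r α hρ hgap => ?_⟩
  obtain ⟨G, hG⟩ := hK ρ r α hρ hgap
  exact ⟨exists_mem_Xi hρ, fun _ _ => hG.Xi_inter_Xi_eq_empty,
    fun _ hV _ hξ => ⟨Ups_subset_Xi hξ, hG.resN_subset hV hξ⟩⟩

/-- Theorem 5.18: for sufficiently large ρ, the sets Ξ(V) (V running over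
all lattice r-subspaces) cover ℝ^d, are pairwise disjoint, and satisfy Υ(ξ) ⊆ Ξ(V) and
N(ξ) ⊆ V for every ξ ∈ Ξ(V). -/
theorem Xi_partition
    (d : ℕ) (hd : 2 ≤ d) (B : Basis (Fin d) ℝ (EuclideanSpace ℝ (Fin d)))
    (κ : ℝ) (α : ℕ → ℝ) :
    ∃ ρ₀ : ℝ, ∀ ρ r : ℝ, ρ₀ ≤ ρ → GoodParams B ρ r κ α →
      (∀ ξ : EuclideanSpace ℝ (Fin d),
        ∃ V : Submodule ℝ (EuclideanSpace ℝ (Fin d)),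
          IsLatticeSubspace B r V ∧ ξ ∈ Xi B ρ r α V) ∧
      (∀ V₁ V₂ : Submodule ℝ (EuclideanSpace ℝ (Fin d)),
        IsLatticeSubspace B r V₁ → IsLatticeSubspace B r V₂ → V₁ ≠ V₂ →
        Xi B ρ r α V₁ ∩ Xi B ρ r α V₂ = ∅) ∧
      (∀ V : Submodule ℝ (EuclideanSpace ℝ (Fin d)), IsLatticeSubspace B r V →
        ∀ ξ ∈ Xi B ρ r α V,
          Ups B ρ (α 1) r ξ ⊆ Xi B ρ r α V ∧
          resN B ρ (α 1) r ξ ⊆ (V : Set (EuclideanSpace ℝ (Fin d)))) := by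
  obtain ⟨K, hK⟩ := Xi_partition_general B
  exact ⟨|K| ^ (κ * d ^ 2)⁻¹, fun ρ r hρ hgood => hK ρ r α (one_pos.trans_le hgood.1)
    fun _ _ hnd => hgood.mul_rpow_le hρ hnd⟩
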